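/- arXiv:2510.27574 — 4 statements merged into one kernel-verified Lean document; each statement's English description precedes it below -/
import Mathlib

section
/- For all n ≥ 1 and 1 ≤ k ≤ n, the number f_FR(n,k) of Fubini rankings with n competitors having exactly k lucky cars satisfies f_FR(n,k) = ∑ n!/(c_1!·c_2!⋯c_k!), where the sum ranges over all compositions (c_1,c_2,…,c_k) of n into exactly k positive parts. -/
/-- A Fubini ranking with `n` competitors: entries are in `[n]` (represented by `Fin n`,
where `i : Fin n` stands for the rank `i.val + 1`), and for every rank `r` occurring among
the entries, the number of indices `j` whose entry is strictly smaller than `r` equals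
`r - 1` (i.e. `r.val` in the `Fin n` encoding). -/
def IsFubini {n : ℕ} (α : Fin n → Fin n) : Prop :=
  ∀ r : Fin n, (∃ i, α i = r) →
    (Finset.univ.filter (fun j => α j < r)).card = (r : ℕ)

/-- The set of lucky cars of `α`: car `i` is lucky iff it is the first occurrence of its
value, i.e. `α j ≠ α i` for all `j < i`. -/
def luckySet {n : ℕ} (α : Fin n → Fin n) : Finset (Fin n) :=
  Finset.univ.filter (fun i => ∀ j, j < i → α j ≠ α i)

/-- The number of lucky cars of `α`. -/
def lucky {n : ℕ} (α : Fin n → Fin n) : ℕ := (luckySet α).card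

instance {n : ℕ} : DecidablePred (IsFubini (n := n)) := fun α =>
  inferInstanceAs (Decidable (∀ r : Fin n, (∃ i, α i = r) →
    (Finset.univ.filter (fun j => α j < r)).card = (r : ℕ)))

/-- The number of Fubini rankings with `n` competitors having exactly `k` lucky cars. -/
noncomputable def fFR (n k : ℕ) : ℕ :=
  Nat.card {α : Fin n → Fin n // IsFubini α ∧ lucky α = k}

/-!
The order pattern of a Fubini ranking determines it: its entry `i` is the number of competitors that
do strictly better than `i`. Hence Fubini rankings are the fixed points of the map that turns
arbitrary scores into ranks, and each one with `k` distinct ranks comes from exactly one surjective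
score `Fin n → Fin k`. Since the lucky cars are in bijection with the distinct ranks, `fFR n k`
counts surjections. Sorting these by their fiber cardinalities `c`, a composition of `n`, leaves
the number of words with content `c`, which is the coefficient of `∏ i, X i ^ c i` in
`(∑ i, X i) ^ n`.
-/

open Finset Function

section FiberCard

variable {ι κ : Type*} [Fintype κ] [DecidableEq ι]

/-- The content of a word `g : κ → ι`: the number of occurrences of each letter. -/
def fiberCard (g : κ → ι) (i : ι) : ℕ := #{x | g x = i}

theorem surjective_iff_forall_fiberCard_pos {g : κ → ι} :
    Surjective g ↔ ∀ i, 0 < fiberCard g i := by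
  simp [Surjective, fiberCard, card_pos, filter_nonempty_iff]

theorem prod_X_eq_monomial_fiberCard {R : Type*} [CommSemiring R] [Finite ι] (g : κ → ι) :
    ∏ x, (MvPolynomial.X (g x) : MvPolynomial ι R) =
      MvPolynomial.monomial (Finsupp.equivFunOnFinite.symm (fiberCard g)) 1 := by
  have hcontent : Finsupp.equivFunOnFinite.symm (fiberCard g) = ∑ x, Finsupp.single (g x) 1 := by
    ext i
    simp [fiberCard, Finsupp.single_apply]
  rw [hcontent, MvPolynomial.monomial_sum_one]
  rfl

variable [Fintype ι]

theorem sum_fiberCard (g : κ → ι) : ∑ i, fiberCard g i = Fintype.card κ :=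
  (card_eq_sum_card_fiberwise fun x _ => mem_coe.2 (mem_univ (g x))).symm

variable [DecidableEq κ]

theorem card_fiberCard_eq {c : ι → ℕ} (hc : ∑ i, c i = Fintype.card κ) :
    #{g : κ → ι | fiberCard g = c} = Nat.multinomial univ c := by
  let d : ι →₀ ℕ := Finsupp.equivFunOnFinite.symm c
  have hd : d.sum (fun _ m => m) = Fintype.card κ := by
    rw [Finsupp.sum_fintype _ _ fun _ => rfl]
    exact hc
  have hexpand : (∑ i, MvPolynomial.X i : MvPolynomial ι ℕ) ^ Fintype.card κ =
      ∑ g : κ → ι, MvPolynomial.monomial (Finsupp.equivFunOnFinite.symm (fiberCard g)) 1 := by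
    simp only [← prod_X_eq_monomial_fiberCard, ← Fintype.prod_sum, prod_const, card_univ]
  calc #{g : κ → ι | fiberCard g = c}
      = MvPolynomial.coeff d ((∑ i, MvPolynomial.X i : MvPolynomial ι ℕ) ^ Fintype.card κ) := by
        simp [hexpand, MvPolynomial.coeff_sum, MvPolynomial.coeff_monomial, d]
    _ = d.multinomial := by
        rw [MvPolynomial.coeff_sum_X_pow_of_fintype, if_pos hd, Nat.cast_id]
    _ = Nat.multinomial univ c := Finsupp.multinomial_eq_of_support_subset (subset_univ _)

theorem card_surjective_eq_sum_multinomial :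
    #{g : κ → ι | Surjective g} =
      ∑ c ∈ piAntidiag (univ : Finset ι) (Fintype.card κ) with ∀ i, 0 < c i,
        Nat.multinomial univ c := by
  have hmaps : Set.MapsTo fiberCard (({g | Surjective g} : Finset (κ → ι)) : Set (κ → ι))
      (({c ∈ piAntidiag univ (Fintype.card κ) | ∀ i, 0 < c i} : Finset (ι → ℕ)) :
        Set (ι → ℕ)) := by
    intro g hg
    simpa [sum_fiberCard, surjective_iff_forall_fiberCard_pos] using hg
  rw [card_eq_sum_card_fiberwise hmaps]
  refine sum_congr rfl fun c hc => ?_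
  obtain ⟨hsum, hpos⟩ : ∑ i, c i = Fintype.card κ ∧ ∀ i, 0 < c i := by simpa using hc
  rw [← card_fiberCard_eq hsum, filter_filter]
  congr 1 with g
  simp only [mem_filter_univ, and_iff_right_iff_imp]
  rintro rfl
  exact surjective_iff_forall_fiberCard_pos.2 hpos

end FiberCard

theorem bijOn_setOf_forall_lt_ne {ι β : Type*} [LinearOrder ι] [WellFoundedLT ι] (f : ι → β) :
    Set.BijOn f {i | ∀ j < i, f j ≠ f i} (Set.range f) := by
  refine ⟨fun i _ => Set.mem_range_self i, fun i hi j hj hij => ?_, ?_⟩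
  · exact le_antisymm (not_lt.1 fun h => hi j h hij.symm) (not_lt.1 fun h => hj i h hij)
  · rintro _ ⟨i, rfl⟩
    obtain ⟨m, hm, hmin⟩ := wellFounded_lt.has_min {j | f j = f i} ⟨i, rfl⟩
    exact ⟨m, fun j hj h => hmin j (h.trans hm) hj, hm⟩

theorem eq_of_surjective_of_lt_iff_lt {ι β : Type*} [LinearOrder β] [WellFoundedLT β]
    {g g' : ι → β} (hg : Surjective g) (hg' : Surjective g')
    (h : ∀ i j, g i < g j ↔ g' i < g' j) : g = g' := by
  let F : β → β := g' ∘ surjInv hg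
  have hF : StrictMono F := fun a b hab =>
    (h _ _).1 (by simpa only [surjInv_eq] using hab)
  have hcomp : F ∘ g = g' := by
    ext i
    refine eq_of_forall_lt_iff fun b => ?_
    obtain ⟨j, rfl⟩ := hg' b
    simp only [F, comp_apply, ← h, surjInv_eq]
  -- A strictly monotone self-map of a well-order is determined by its range, which here is full.
  have hF_id : F = id := by
    rw [← hF.range_inj strictMono_id, Set.range_id, ← hg.range_comp, hcomp, hg'.range_eq]
  rw [← hcomp, hF_id, id_comp]

section CompetitionRanking

variable {n : ℕ} {β : Type*}

/-- The standard competition ranking determined by the scores `g`, lower scores being better: the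
rank of competitor `i` is the number of competitors with a strictly smaller score, ranks being
counted from `0` as in `IsFubini`. -/
def competitionRanking [Preorder β] [DecidableLT β] (g : Fin n → β) (i : Fin n) : Fin n :=
  ⟨#{j | g j < g i}, by
    simpa using card_lt_univ_of_notMem (s := {j | g j < g i}) (x := i) (by simp)⟩

theorem isFubini_iff_competitionRanking_eq {α : Fin n → Fin n} :
    IsFubini α ↔ competitionRanking α = α :=
  Set.forall_mem_range.trans (by simp only [competitionRanking, funext_iff, Fin.ext_iff])

variable [LinearOrder β]

theorem competitionRanking_lt_iff (g : Fin n → β) {i j : Fin n} :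
    competitionRanking g i < competitionRanking g j ↔ g i < g j := by
  have hmono : StrictMono fun b : Set.range g => #{l | g l < b} := by
    rintro ⟨_, i, rfl⟩ ⟨b, _⟩ (hib : g i < b)
    refine card_lt_card ⟨monotone_filter_right _ fun l _ hl => hl.trans hib, fun hsub => ?_⟩
    simpa using hsub (mem_filter_univ i |>.2 hib)
  exact hmono.lt_iff_lt (a := ⟨g i, i, rfl⟩) (b := ⟨g j, j, rfl⟩)

theorem competitionRanking_eq_iff (g : Fin n → β) {i j : Fin n} :
    competitionRanking g i = competitionRanking g j ↔ g i = g j := by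
  simp only [eq_iff_le_not_lt, ← not_lt, competitionRanking_lt_iff]

theorem isFubini_competitionRanking (g : Fin n → β) : IsFubini (competitionRanking g) := by
  rintro _ ⟨i, rfl⟩
  simp only [competitionRanking_lt_iff]
  rfl

theorem lucky_competitionRanking (g : Fin n → β) :
    lucky (competitionRanking g) = #(univ.image g) := by
  have hbij : Set.BijOn g (luckySet (competitionRanking g)) (univ.image g) := by
    simpa [luckySet, competitionRanking_eq_iff] using bijOn_setOf_forall_lt_ne g
  exact hbij.finsetCard_eq

theorem competitionRanking_comp {γ : Type*} [Preorder γ] [DecidableLT γ] {F : β → γ}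
    (hF : StrictMono F) (g : Fin n → β) : competitionRanking (F ∘ g) = competitionRanking g := by
  funext i
  simp only [competitionRanking, comp_apply, hF.lt_iff_lt]

theorem exists_surjective_competitionRanking_eq {k : ℕ} {α : Fin n → Fin n} (hα : IsFubini α)
    (hk : lucky α = k) : ∃ g : Fin n → Fin k, Surjective g ∧ competitionRanking g = α := by
  rw [isFubini_iff_competitionRanking_eq] at hα
  have hcard : #(univ.image α) = k := by rw [← lucky_competitionRanking, hα, hk]
  let F := (univ.image α).orderEmbOfFin hcard
  have hrange : Set.range F = Set.range α := by simp [F]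
  choose g hg using fun i => hrange.ge (Set.mem_range_self i)
  have hcomp : F ∘ g = α := funext hg
  refine ⟨g, fun r => ?_, ?_⟩
  · obtain ⟨i, hi⟩ := hrange.le (Set.mem_range_self r)
    exact ⟨i, F.injective ((hg i).trans hi)⟩
  · rw [← competitionRanking_comp F.strictMono, hcomp, hα]

theorem bijOn_competitionRanking (n k : ℕ) :
    Set.BijOn competitionRanking {g : Fin n → Fin k | Surjective g}
      {α | IsFubini α ∧ lucky α = k} := by
  refine ⟨fun g hg => ⟨isFubini_competitionRanking g, ?_⟩, fun g hg g' hg' h => ?_, ?_⟩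
  · rw [lucky_competitionRanking, image_univ_of_surjective hg, card_univ, Fintype.card_fin]
  · refine eq_of_surjective_of_lt_iff_lt hg hg' fun i j => ?_
    rw [← competitionRanking_lt_iff, h, competitionRanking_lt_iff]
  · rintro α ⟨hα, hk⟩
    exact exists_surjective_competitionRanking_eq hα hk

end CompetitionRanking

theorem fFR_eq_card_surjective (n k : ℕ) : fFR n k = #{g : Fin n → Fin k | Surjective g} := by
  rw [fFR, ← Fintype.card_subtype, ← Nat.card_eq_fintype_card]
  exact (Nat.card_congr (bijOn_competitionRanking n k).equiv).symm

/-- `f_FR(n,k) = ∑ n!/(c₁!·c₂!⋯c_k!)`, the sum ranging over all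
compositions `(c₁,…,c_k)` of `n` into exactly `k` positive parts. -/
theorem fFR_eq_sum_multinomials (n k : ℕ) (hn : 1 ≤ n) (hk : 1 ≤ k) (hkn : k ≤ n) :
    fFR n k
      = ∑ c ∈ (Finset.Nat.antidiagonalTuple k n).filter (fun c => ∀ i, 0 < c i),
          Nat.factorial n / ∏ i, Nat.factorial (c i) := by
  have hmultinomial : ∀ c ∈ Finset.Nat.antidiagonalTuple k n,
      Nat.multinomial univ c = Nat.factorial n / ∏ i, Nat.factorial (c i) := fun c hc => by
    rw [Nat.multinomial, Finset.Nat.mem_antidiagonalTuple.1 hc]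
  rw [fFR_eq_card_surjective, card_surjective_eq_sum_multinomial, Fintype.card_fin,
    piAntidiag_univ_fin_eq_antidiagonalTuple]
  exact sum_congr (filter_congr_decidable ..) fun c hc => hmultinomial c (mem_of_mem_filter c hc)
end

section
/- For every n ≥ 1, the lucky polynomial of weakly increasing Fubini rankings satisfies ∑_{α ∈ FR_n^↑} q^{lucky(α)} = q·(q+1)^{n−1}, as an identity of polynomials in q (equivalently, for every real q). -/
instance {n : ℕ} : DecidablePred (Monotone : (Fin n → Fin n) → Prop) := fun f =>
  inferInstanceAs (Decidable (∀ a b : Fin n, a ≤ b → f a ≤ f b))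

/-!
For a weakly increasing `α`, each set `{j | α j < α i}` is an initial segment, so the Fubini
condition says that `α j < α i ↔ j < α i`: the weakly increasing Fubini rankings are exactly the
kernel operators of the chain `Fin n`. Their lucky cars are their fixed points, and a kernel
operator of a finite chain is determined by its set of fixed points, which can be any set
containing the least element. Hence the sum is `∑ q ^ #S` over all `S ⊆ [n]` containing `1`.
-/

open Finset Function

section KernelOperator

/-- A kernel operator, the order dual of a closure operator. On a partial order, the equivalence
encodes at once that `f` is monotone, idempotent and satisfies `f x ≤ x`. -/
def IsKernelOperator {P : Type*} [Preorder P] (f : P → P) : Prop :=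
  ∀ x y, f x ≤ f y ↔ f x ≤ y

namespace IsKernelOperator

section Preorder

variable {P : Type*} [Preorder P] {f : P → P}

theorem apply_le (hf : IsKernelOperator f) (x : P) : f x ≤ x :=
  (hf x x).1 le_rfl

theorem monotone (hf : IsKernelOperator f) : Monotone f :=
  fun x y hxy => (hf x y).2 ((hf.apply_le x).trans hxy)

end Preorder

section PartialOrder

variable {P : Type*} [PartialOrder P] {f g : P → P}

theorem apply_apply (hf : IsKernelOperator f) (x : P) : f (f x) = f x :=
  (hf.apply_le (f x)).antisymm ((hf x (f x)).2 le_rfl)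

theorem bot_mem_fixedPoints [OrderBot P] (hf : IsKernelOperator f) : ⊥ ∈ fixedPoints f :=
  le_bot_iff.1 (hf.apply_le ⊥)

theorem le_of_fixedPoints_subset (hf : IsKernelOperator f) (hg : IsKernelOperator g)
    (h : fixedPoints f ⊆ fixedPoints g) : f ≤ g := fun x =>
  calc
    f x = g (f x) := (h (hf.apply_apply x)).symm
    _ ≤ g x := hg.monotone (hf.apply_le x)

theorem eq_of_fixedPoints_eq (hf : IsKernelOperator f) (hg : IsKernelOperator g)
    (h : fixedPoints f = fixedPoints g) : f = g :=
  (hf.le_of_fixedPoints_subset hg h.subset).antisymm (hg.le_of_fixedPoints_subset hf h.superset)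

end PartialOrder

end IsKernelOperator

variable {P : Type*} [SemilatticeSup P] [OrderBot P] [DecidableLE P]

/-- The map rounding `x` down to the join of the elements of `S` below it. It is the kernel
operator with set of fixed points `S` when `S` is closed under finite joins. -/
def floorIn (S : Finset P) (x : P) : P :=
  {s ∈ S | s ≤ x}.sup id

theorem floorIn_le_iff {S : Finset P} {x y : P} :
    floorIn S x ≤ y ↔ ∀ s ∈ S, s ≤ x → s ≤ y := by
  simp only [floorIn, Finset.sup_le_iff, mem_filter, and_imp, id]

theorem le_floorIn {S : Finset P} {s x : P} (hs : s ∈ S) (hsx : s ≤ x) : s ≤ floorIn S x :=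
  floorIn_le_iff.1 le_rfl s hs hsx

theorem isKernelOperator_floorIn (S : Finset P) : IsKernelOperator (floorIn S) := by
  have floorIn_le (y : P) : floorIn S y ≤ y := floorIn_le_iff.2 fun _ _ hsy => hsy
  refine fun x y => ⟨fun h => h.trans (floorIn_le y), fun h => floorIn_le_iff.2 fun s hs hsx => ?_⟩
  exact le_floorIn hs ((le_floorIn hs hsx).trans h)

theorem fixedPoints_floorIn {S : Finset P} (hbot : ⊥ ∈ S) (hsup : SupClosed (S : Set P)) :
    fixedPoints (floorIn S) = S := by
  ext x
  constructor
  · intro hx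
    rw [← hx.eq]
    exact Finset.sup_mem (S : Set P) hbot (fun _ ha _ hb => hsup ha hb) _ id
      fun s hs => (mem_filter.1 hs).1
  · intro hx
    exact ((isKernelOperator_floorIn S).apply_le x).antisymm (le_floorIn hx le_rfl)

end KernelOperator

section Counting

theorem eq_of_isLowerSet_of_card_eq {P : Type*} [LinearOrder P] {s t : Finset P}
    (hs : IsLowerSet (s : Set P)) (ht : IsLowerSet (t : Set P)) (h : #s = #t) : s = t := by
  rcases hs.total ht with hst | hts
  · exact eq_of_subset_of_card_le (coe_subset.1 hst) h.ge
  · exact (eq_of_subset_of_card_le (coe_subset.1 hts) h.le).symm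

theorem sum_Icc_pow_card {ι R : Type*} [DecidableEq ι] [CommSemiring R] {s t : Finset ι}
    (h : s ⊆ t) (q : R) : ∑ u ∈ Icc s t, q ^ #u = q ^ #s * (q + 1) ^ #(t \ s) := by
  have hdisj {u : Finset ι} (hu : u ∈ (t \ s).powerset) : Disjoint s u :=
    disjoint_sdiff.mono_right (mem_powerset.1 hu)
  have hinj : Set.InjOn (s ∪ ·) ((t \ s).powerset : Set (Finset ι)) := fun u hu v hv huv => by
    rw [← union_sdiff_cancel_left (hdisj hu), ← union_sdiff_cancel_left (hdisj hv)]
    exact congrArg (· \ s) huv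
  calc
    ∑ u ∈ Icc s t, q ^ #u = ∑ u ∈ (t \ s).powerset, q ^ #(s ∪ u) := by
      rw [Icc_eq_image_powerset h, sum_image hinj]
    _ = ∑ u ∈ (t \ s).powerset, q ^ #s * q ^ #u :=
      sum_congr rfl fun u hu => by rw [card_union_of_disjoint (hdisj hu), pow_add]
    _ = q ^ #s * (q + 1) ^ #(t \ s) := by
      simp only [← mul_sum, ← prod_const, prod_add_one]

end Counting

section Fubini

variable {n : ℕ} {α : Fin n → Fin n}

theorem IsFubini.lt_apply_iff (hF : IsFubini α) (hα : Monotone α) (i j : Fin n) :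
    α j < α i ↔ j < α i := by
  have hlower : IsLowerSet (({k | α k < α i} : Finset (Fin n)) : Set (Fin n)) := by
    rw [coe_filter_univ]
    exact (isLowerSet_Iio (α i)).preimage hα
  have hIio : ({k | α k < α i} : Finset (Fin n)) = Iio (α i) := by
    refine eq_of_isLowerSet_of_card_eq hlower ?_ ?_
    · rw [coe_Iio]
      exact isLowerSet_Iio (α i)
    · rw [hF (α i) ⟨i, rfl⟩, Fin.card_Iio]
  simpa only [mem_filter_univ, mem_Iio] using Finset.ext_iff.1 hIio j

theorem isFubini_and_monotone_iff_isKernelOperator :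
    IsFubini α ∧ Monotone α ↔ IsKernelOperator α := by
  constructor
  · rintro ⟨hF, hα⟩ i j
    exact not_iff_not.1 (by simpa only [not_le] using hF.lt_apply_iff hα i j)
  · refine fun hα => ⟨?_, hα.monotone⟩
    rintro _ ⟨i, rfl⟩
    have hIio : ({j | α j < α i} : Finset (Fin n)) = Iio (α i) := by
      ext j
      simpa only [mem_filter_univ, mem_Iio, not_le] using not_congr (hα i j)
    rw [hIio, Fin.card_Iio]

theorem IsKernelOperator.coe_luckySet (hα : IsKernelOperator α) :
    (luckySet α : Set (Fin n)) = fixedPoints α := by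
  ext i
  rw [luckySet, coe_filter_univ, Set.mem_ofPred_eq, mem_fixedPoints]
  constructor
  · intro hlucky
    by_contra hne
    exact hlucky (α i) ((hα.apply_le i).lt_of_ne hne) (hα.apply_apply i)
  · intro hi j hji hj
    exact ((hα.apply_le j).trans_lt hji).ne (hj.trans hi)

theorem bijOn_luckySet [NeZero n] :
    Set.BijOn luckySet {α : Fin n → Fin n | IsFubini α ∧ Monotone α} {S | ⊥ ∈ S} := by
  simp only [isFubini_and_monotone_iff_isKernelOperator]
  refine ⟨fun α hα => ?_, fun α hα β hβ h => ?_, fun S hS => ?_⟩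
  · rw [Set.mem_ofPred_eq, ← mem_coe, hα.coe_luckySet]
    exact hα.bot_mem_fixedPoints
  · refine hα.eq_of_fixedPoints_eq hβ ?_
    rw [← hα.coe_luckySet, ← hβ.coe_luckySet, h]
  · refine ⟨floorIn S, isKernelOperator_floorIn S, coe_injective ?_⟩
    rw [(isKernelOperator_floorIn S).coe_luckySet,
      fixedPoints_floorIn hS (LinearOrder.supClosed _)]

end Fubini

theorem lucky_polynomial_weakly_increasing_fubini_general {R : Type*} [CommSemiring R]
    (n : ℕ) (hn : 1 ≤ n) (q : R) :
    ∑ α ∈ Finset.univ.filter (fun α : Fin n → Fin n => IsFubini α ∧ Monotone α),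
        q ^ lucky α
      = q * (q + 1) ^ (n - 1) := by
  have : NeZero n := .of_pos hn
  have hbij : Set.BijOn (luckySet (n := n))
      ↑(Finset.univ.filter fun α : Fin n → Fin n => IsFubini α ∧ Monotone α)
      ↑({S | ⊥ ∈ S} : Finset (Finset (Fin n))) := by
    simpa only [coe_filter_univ] using bijOn_luckySet
  calc
    _ = ∑ S : Finset (Fin n) with ⊥ ∈ S, q ^ #S :=
      sum_nbij luckySet hbij.mapsTo hbij.injOn hbij.surjOn fun _ _ => rfl
    _ = ∑ S ∈ Icc ({⊥} : Finset (Fin n)) univ, q ^ #S := by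
      congr 1
      ext S
      simp
    _ = q ^ #{(⊥ : Fin n)} * (q + 1) ^ #(univ \ {(⊥ : Fin n)}) := sum_Icc_pow_card (subset_univ _) q
    _ = q * (q + 1) ^ (n - 1) := by
      rw [card_singleton, pow_one, card_univ_sdiff, card_singleton, Fintype.card_fin]

/-- The lucky polynomial of weakly increasing Fubini rankings with `n`
competitors satisfies `∑_{α ∈ FR_n^↑} q^{lucky(α)} = q(q+1)^(n−1)` for every real `q`. -/
theorem lucky_polynomial_weakly_increasing_fubini (n : ℕ) (hn : 1 ≤ n) (q : ℝ) :
    ∑ α ∈ Finset.univ.filter (fun α : Fin n → Fin n => IsFubini α ∧ Monotone α),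
        q ^ lucky α
      = q * (q + 1) ^ (n - 1) := by
  exact lucky_polynomial_weakly_increasing_fubini_general n hn q
end

section
/- Let n ≥ 1 and let I = {i_1, i_2, …, i_k} ⊆ [n] with 1 = i_1 < i_2 < ⋯ < i_k ≤ n, and set i_{k+1} = n+1. Then the number of Fubini rankings α with n competitors whose set of lucky cars is exactly I equals ∏_{ℓ=1}^{k} ℓ^{i_{ℓ+1} − i_ℓ}. -/
/-!
Replacing each rank by its position among the `k = |I|` ranks that occur turns a Fubini ranking into
a sequence in `Fin k` with the same order relations, hence with the same lucky cars. It is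
surjective because distinct values and lucky cars are equinumerous, and the ranking can be recovered
from it by counting strictly smaller entries.

Now read the sequence from left to right: a lucky car takes any value not seen so far, an unlucky
one repeats a value already seen. The lucky cars contribute `k!` in total and an unlucky one the
number of lucky cars before it. Distributing the factors of `k!` over the lucky cars in increasing
order, every car contributes the number of lucky cars up to and including it, which is `ℓ` exactly
from car `i_ℓ` to car `i_{ℓ+1} - 1`.
-/

open Finset

section FirstOccurrences

variable {ι β γ : Type*} [Fintype ι] [LinearOrder ι] [DecidableEq β] [DecidableEq γ]

/-- The indices at which the family `g` takes its value for the first time: the lucky cars, for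
entries in an arbitrary type. -/
def firstOccurrences (g : ι → β) : Finset ι :=
  {m | ∀ j < m, g j ≠ g m}

theorem mem_firstOccurrences {g : ι → β} {m : ι} :
    m ∈ firstOccurrences g ↔ ∀ j < m, g j ≠ g m := by
  simp [firstOccurrences]

theorem luckySet_eq_firstOccurrences {n : ℕ} (α : Fin n → Fin n) :
    luckySet α = firstOccurrences α := by
  ext m
  simp [luckySet, mem_firstOccurrences]

theorem firstOccurrences_congr {g : ι → β} {h : ι → γ} (hgh : ∀ j m, g j = g m ↔ h j = h m) :
    firstOccurrences g = firstOccurrences h := by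
  ext m
  simp [mem_firstOccurrences, hgh]

theorem exists_mem_firstOccurrences (g : ι → β) (m : ι) : ∃ j ∈ firstOccurrences g, g j = g m := by
  induction m using WellFoundedLT.induction with
  | ind m ih =>
    by_cases hm : m ∈ firstOccurrences g
    · exact ⟨m, hm, rfl⟩
    · obtain ⟨j, hjm, hj⟩ : ∃ j < m, g j = g m := by simpa [mem_firstOccurrences] using hm
      obtain ⟨l, hl, hlj⟩ := ih j hjm
      exact ⟨l, hl, hlj.trans hj⟩

theorem injOn_firstOccurrences (g : ι → β) : Set.InjOn g (firstOccurrences g) := by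
  intro a ha b hb hab
  rw [mem_coe, mem_firstOccurrences] at ha hb
  exact le_antisymm (not_lt.1 fun h => ha b h hab.symm) (not_lt.1 fun h => hb a h hab)

theorem card_firstOccurrences (g : ι → β) : #(firstOccurrences g) = #(univ.image g) := by
  rw [← card_image_of_injOn (injOn_firstOccurrences g)]
  congr 1
  ext x
  simp only [mem_image, mem_univ, true_and]
  constructor
  · rintro ⟨j, -, hj⟩
    exact ⟨j, hj⟩
  · rintro ⟨m, rfl⟩
    exact exists_mem_firstOccurrences g m

theorem surjective_of_card_firstOccurrences_eq [Fintype β] {g : ι → β}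
    (hg : #(firstOccurrences g) = Fintype.card β) : Function.Surjective g := by
  rw [card_firstOccurrences, card_eq_iff_eq_univ] at hg
  intro x
  simpa using hg.ge (mem_univ x)

end FirstOccurrences

section SameOrder

variable {ι β γ : Type*} [LinearOrder β] [LinearOrder γ]

theorem eq_iff_eq_of_lt_iff_lt {f : ι → β} {g : ι → γ} (hfg : ∀ a b, f a < f b ↔ g a < g b)
    (a b : ι) : f a = f b ↔ g a = g b := by
  simp only [le_antisymm_iff, ← not_lt, hfg]

theorem eq_of_surjective_of_lt_iff_lt_s8 [WellFoundedLT β] {f g : ι → β}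
    (hf : Function.Surjective f) (hg : Function.Surjective g)
    (hfg : ∀ a b, f a < f b ↔ g a < g b) : f = g := by
  suffices ∀ x a, f a = x → g a = x from funext fun a => (this _ a rfl).symm
  intro x
  induction x using WellFoundedLT.induction with
  | ind x ih =>
    rintro a rfl
    refine le_antisymm (not_lt.1 fun hlt => ?_) (not_lt.1 fun hlt => ?_)
    · obtain ⟨c, hc⟩ := hg (f a)
      have hca : f c < f a := (hfg c a).2 (hc.trans_lt hlt)
      exact hca.ne ((ih _ hca c rfl).symm.trans hc)
    · obtain ⟨c, hc⟩ := hf (g a)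
      have hca : g c < g a := (hfg c a).1 (hc.trans_lt hlt)
      exact hca.ne (ih _ hlt c hc)

theorem exists_fin_lt_iff_lt_of_card_image_eq [Fintype ι] {f : ι → β} {k : ℕ}
    (hk : #(univ.image f) = k) : ∃ g : ι → Fin k, ∀ a b, g a < g b ↔ f a < f b := by
  let e := (univ.image f).orderIsoOfFin hk
  exact ⟨fun a => e.symm ⟨f a, mem_image_of_mem f (mem_univ a)⟩, fun a b => by simp⟩

end SameOrder

section CompetitionRank

variable {n : ℕ} {β γ : Type*} [LinearOrder β] [LinearOrder γ]

/-- The standard competition ranking (`1, 2, 2, 4, …`) of competitors with scores `g`, the lowest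
score being the best. Ranks start at `0`, as in `IsFubini`. -/
def competitionRank (g : Fin n → β) (m : Fin n) : Fin n :=
  ⟨#{j | g j < g m}, by
    simpa using card_lt_card (filter_ssubset.2 ⟨m, mem_univ m, lt_irrefl (g m)⟩)⟩

theorem competitionRank_congr {f : Fin n → β} {g : Fin n → γ}
    (hfg : ∀ a b, f a < f b ↔ g a < g b) : competitionRank f = competitionRank g := by
  ext m
  simp [competitionRank, hfg]

theorem competitionRank_lt_iff (g : Fin n → β) (j m : Fin n) :
    competitionRank g j < competitionRank g m ↔ g j < g m := by
  change #{l | g l < g j} < #{l | g l < g m} ↔ g j < g m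
  constructor
  · contrapose!
    exact fun h => card_le_card (monotone_filter_right _ fun l _ hl => lt_of_lt_of_le hl h)
  · intro h
    have hsub : ({l | g l < g j} : Finset (Fin n)) ⊆ ({l | g l < g m} : Finset (Fin n)) :=
      monotone_filter_right _ fun l _ hl => lt_trans hl h
    exact card_lt_card ((ssubset_iff_of_subset hsub).2 ⟨j, by simpa using h, by simp⟩)

theorem isFubini_iff_competitionRank_eq {α : Fin n → Fin n} :
    IsFubini α ↔ competitionRank α = α := by
  simp only [IsFubini, forall_exists_index, forall_apply_eq_imp_iff]
  simp only [funext_iff, Fin.ext_iff, competitionRank]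

theorem isFubini_competitionRank (g : Fin n → β) : IsFubini (competitionRank g) :=
  isFubini_iff_competitionRank_eq.2 (competitionRank_congr (competitionRank_lt_iff g))

theorem luckySet_competitionRank (g : Fin n → β) :
    luckySet (competitionRank g) = firstOccurrences g :=
  (luckySet_eq_firstOccurrences _).trans
    (firstOccurrences_congr (eq_iff_eq_of_lt_iff_lt (competitionRank_lt_iff g)))

theorem card_isFubini_luckySet_eq (I : Finset (Fin n)) :
    Nat.card {α : Fin n → Fin n // IsFubini α ∧ luckySet α = I} =
      Nat.card {g : Fin n → Fin #I // firstOccurrences g = I} := by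
  symm
  refine Nat.card_eq_of_bijective
    (fun g => ⟨competitionRank g.1, isFubini_competitionRank g.1,
      (luckySet_competitionRank g.1).trans g.2⟩) ⟨?_, ?_⟩
  · rintro ⟨f, hf⟩ ⟨g, hg⟩ hfg
    have hrank : competitionRank f = competitionRank g := congrArg Subtype.val hfg
    have hsurj {h : Fin n → Fin #I} (hh : firstOccurrences h = I) : Function.Surjective h :=
      surjective_of_card_firstOccurrences_eq (by rw [hh, Fintype.card_fin])
    refine Subtype.ext (eq_of_surjective_of_lt_iff_lt_s8 (hsurj hf) (hsurj hg) fun a b => ?_)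
    rw [← competitionRank_lt_iff f, hrank, competitionRank_lt_iff]
  · rintro ⟨α, hα, rfl⟩
    have hcard : #(univ.image α) = #(luckySet α) := by
      rw [luckySet_eq_firstOccurrences, card_firstOccurrences]
    obtain ⟨g, hg⟩ := exists_fin_lt_iff_lt_of_card_image_eq hcard
    have hrank : competitionRank g = α :=
      (competitionRank_congr hg).trans (isFubini_iff_competitionRank_eq.1 hα)
    exact ⟨⟨g, by rw [← luckySet_competitionRank, hrank]⟩, Subtype.ext hrank⟩

end CompetitionRank

section Counting

variable {n : ℕ} {β : Type*} [DecidableEq β] (P : ℕ → Prop) [DecidablePred P]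

theorem card_filter_fin_val_eq_count (n : ℕ) : #{m : Fin n | P m} = Nat.count P n := by
  rw [Nat.count_eq_card_filter_range, ← Nat.Iio_eq_range, ← Fin.map_valEmbedding_univ, filter_map,
    card_map]
  rfl

variable {P}

theorem firstOccurrences_snoc_eq_filter_iff {g : Fin n → β} {x : β} :
    firstOccurrences (Fin.snoc g x : Fin (n + 1) → β) = (univ.filter fun m : Fin (n + 1) => P m) ↔
      firstOccurrences g = (univ.filter fun m : Fin n => P m) ∧ (x ∉ univ.image g ↔ P n) := by
  simp [Finset.ext_iff, mem_firstOccurrences, Fin.forall_fin_succ', Fin.castSucc_lt_last,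
    (Fin.castSucc_lt_last _).le]

variable [Fintype β]

theorem card_notMem_image_iff {g : Fin n → β}
    (hg : firstOccurrences g = univ.filter fun m : Fin n => P m) :
    #{x | x ∉ univ.image g ↔ P n} =
      if P n then Fintype.card β - Nat.count P n else Nat.count P n := by
  have hcard : #(univ.image g) = Nat.count P n := by
    rw [← card_firstOccurrences, hg, card_filter_fin_val_eq_count]
  split_ifs with h
  · rw [← hcard, ← card_compl]
    congr 1
    ext x
    simp [h]
  · rw [← hcard]
    congr 1
    ext x
    simp [h]

variable (β P)

theorem card_firstOccurrences_eq_filter (n : ℕ) :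
    #{g : Fin n → β | firstOccurrences g = univ.filter fun m : Fin n => P m} =
      (Fintype.card β).descFactorial (Nat.count P n) *
        ∏ m ∈ range n, if P m then 1 else Nat.count P m := by
  induction n with
  | zero => simp [Finset.ext_iff]
  | succ n ih =>
    have hstep :
        #{g : Fin (n + 1) → β | firstOccurrences g = univ.filter fun m : Fin (n + 1) => P m} =
        ∑ g : Fin n → β with firstOccurrences g = univ.filter fun m : Fin n => P m,
          #{x | x ∉ univ.image g ↔ P n} := by
      rw [card_filter, ← (Fin.snocEquiv fun _ => β).sum_comp, Fintype.sum_prod_type_right,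
        sum_filter]
      refine sum_congr rfl fun g _ => ?_
      change ∑ x, (if firstOccurrences (Fin.snoc g x : Fin (n + 1) → β) = _ then 1 else 0) = _
      simp_rw [firstOccurrences_snoc_eq_filter_iff, card_filter]
      split_ifs with hg <;> simp [hg]
    rw [hstep, sum_congr rfl fun g hg => card_notMem_image_iff (mem_filter.1 hg).2, sum_const, ih,
      prod_range_succ, Nat.count_succ, smul_eq_mul]
    split_ifs
    · rw [Nat.descFactorial_succ]
      ring
    · rw [add_zero, mul_assoc]

theorem prod_range_count_succ (n : ℕ) :
    ∏ m ∈ range n, Nat.count P (m + 1) =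
      (Nat.count P n).factorial * ∏ m ∈ range n, if P m then 1 else Nat.count P m := by
  induction n with
  | zero => simp
  | succ n ih =>
    rw [prod_range_succ, ih, prod_range_succ, Nat.count_succ]
    split_ifs
    · rw [Nat.factorial_succ]
      ring
    · rw [add_zero]
      ring

theorem card_isFubini_luckySet_eq_filter (n : ℕ) :
    Nat.card {α : Fin n → Fin n // IsFubini α ∧ luckySet α = univ.filter fun m : Fin n => P m} =
      ∏ m ∈ range n, Nat.count P (m + 1) := by
  rw [card_isFubini_luckySet_eq, Nat.card_eq_fintype_card, Fintype.card_subtype,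
    card_firstOccurrences_eq_filter, Fintype.card_fin, card_filter_fin_val_eq_count,
    Nat.descFactorial_self, prod_range_count_succ]

end Counting

section Enumeration

variable {i : ℕ → ℕ}

theorem prod_Ico_eq_prod_pow_of_forall_mem_Ico {M : Type*} [CommMonoid M] {p q : ℕ} (hpq : p ≤ q)
    (hi : MonotoneOn i (Set.Icc p q)) {f c : ℕ → M}
    (hf : ∀ ℓ ∈ Ico p q, ∀ t ∈ Ico (i ℓ) (i (ℓ + 1)), f t = c ℓ) :
    ∏ t ∈ Ico (i p) (i q), f t = ∏ ℓ ∈ Ico p q, c ℓ ^ (i (ℓ + 1) - i ℓ) := by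
  induction q, hpq using Nat.le_induction with
  | base => simp
  | succ q hpq ih =>
    have hpi : i p ≤ i q := hi ⟨le_rfl, by omega⟩ ⟨hpq, q.le_succ⟩ hpq
    have hiq : i q ≤ i (q + 1) := hi ⟨hpq, q.le_succ⟩ ⟨by omega, le_rfl⟩ q.le_succ
    have hinit : ∏ t ∈ Ico (i p) (i q), f t = ∏ ℓ ∈ Ico p q, c ℓ ^ (i (ℓ + 1) - i ℓ) :=
      ih (hi.mono (Set.Icc_subset_Icc_right q.le_succ)) fun ℓ hℓ =>
        hf ℓ (Ico_subset_Ico_right q.le_succ hℓ)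
    have hblock : ∏ t ∈ Ico (i q) (i (q + 1)), f t = c q ^ (i (q + 1) - i q) := by
      rw [prod_eq_pow_card (hf q (mem_Ico.2 ⟨hpq, q.lt_succ_self⟩)), Nat.card_Ico]
    rw [← prod_Ico_consecutive f hpi hiq, hinit, hblock, prod_Ico_succ_top hpq]

variable {k : ℕ} {P : ℕ → Prop} [DecidablePred P]

theorem count_eq_of_mem_Ico (hi : StrictMonoOn i (Set.Icc 1 (k + 1))) (h1 : 0 < i 1)
    (hP : ∀ m, P m ↔ ∃ ℓ, 1 ≤ ℓ ∧ ℓ ≤ k ∧ m + 1 = i ℓ) {ℓ t : ℕ} (hℓ : ℓ ∈ Ico 1 (k + 1))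
    (ht : t ∈ Ico (i ℓ) (i (ℓ + 1))) : Nat.count P t = ℓ := by
  rw [mem_Ico] at hℓ ht
  have himage : {m ∈ range t | P m}.image (· + 1) = (Icc 1 ℓ).image i := by
    ext x
    simp only [mem_image, mem_filter, mem_range, hP, mem_Icc]
    constructor
    · rintro ⟨m, ⟨hmt, a, ha1, hak, hma⟩, rfl⟩
      have haℓ : a < ℓ + 1 :=
        (hi.lt_iff_lt ⟨ha1, by omega⟩ ⟨by omega, by omega⟩).1 (by omega)
      exact ⟨a, ⟨ha1, by omega⟩, hma.symm⟩
    · rintro ⟨a, ⟨ha1, haℓ⟩, rfl⟩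
      have hpos : i 1 ≤ i a := hi.monotoneOn ⟨le_rfl, by omega⟩ ⟨ha1, by omega⟩ ha1
      have hle : i a ≤ i ℓ := hi.monotoneOn ⟨ha1, by omega⟩ ⟨by omega, by omega⟩ haℓ
      exact ⟨i a - 1, ⟨by omega, a, ha1, by omega, by omega⟩, by omega⟩
  have hinj : Set.InjOn i (Icc 1 ℓ) := by
    rw [coe_Icc]
    exact hi.injOn.mono (Set.Icc_subset_Icc_right (by omega))
  rw [Nat.count_eq_card_filter_range, ← card_image_of_injective _ (add_left_injective 1), himage,
    card_image_of_injOn hinj, Nat.card_Icc, Nat.add_sub_cancel]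

end Enumeration

/-- Let `I ⊆ [n]` with elements (as car numbers in `{1,…,n}`)
`1 = i_1 < i_2 < ⋯ < i_k`, and set `i_{k+1} = n+1`. Then the number of Fubini rankings
with `n` competitors whose lucky set is exactly `I` equals `∏_{ℓ=1}^k ℓ^(i_{ℓ+1} − i_ℓ)`.
Here a car index `m : Fin n` corresponds to the car number `m + 1`, and `i : ℕ → ℕ`
enumerates the car numbers of `I` in increasing order. -/
theorem card_fubini_fixed_lucky_set (n k : ℕ) (hn : 1 ≤ n) (hk : 1 ≤ k)
    (I : Finset (Fin n)) (hI : I.card = k)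
    (i : ℕ → ℕ)
    (hmono : ∀ a b : ℕ, 1 ≤ a → a < b → b ≤ k + 1 → i a < i b)
    (h1 : i 1 = 1) (hlast : i (k + 1) = n + 1)
    (hIdesc : ∀ m : Fin n, m ∈ I ↔ ∃ ℓ : ℕ, 1 ≤ ℓ ∧ ℓ ≤ k ∧ (m : ℕ) + 1 = i ℓ) :
    Nat.card {α : Fin n → Fin n // IsFubini α ∧ luckySet α = I}
      = ∏ ℓ ∈ Finset.Icc 1 k, ℓ ^ (i (ℓ + 1) - i ℓ) := by
  classical
  let P : ℕ → Prop := fun m => ∃ ℓ, 1 ≤ ℓ ∧ ℓ ≤ k ∧ m + 1 = i ℓ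
  have hIP : I = univ.filter fun m : Fin n => P m := by
    ext m
    simpa [P] using hIdesc m
  have hi : StrictMonoOn i (Set.Icc 1 (k + 1)) := fun a ha b hb hab => hmono a b ha.1 hab hb.2
  calc Nat.card {α : Fin n → Fin n // IsFubini α ∧ luckySet α = I}
      = ∏ m ∈ range n, Nat.count P (m + 1) := by rw [hIP, card_isFubini_luckySet_eq_filter P]
    _ = ∏ t ∈ Ico (i 1) (i (k + 1)), Nat.count P t := by
        rw [h1, hlast, range_eq_Ico, prod_Ico_add' (Nat.count P) 0 n 1]
    _ = ∏ ℓ ∈ Ico 1 (k + 1), ℓ ^ (i (ℓ + 1) - i ℓ) :=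
        prod_Ico_eq_prod_pow_of_forall_mem_Ico (by omega) hi.monotoneOn fun _ hℓ _ ht =>
          count_eq_of_mem_Ico hi (by omega) (fun _ => Iff.rfl) hℓ ht
    _ = ∏ ℓ ∈ Icc 1 k, ℓ ^ (i (ℓ + 1) - i ℓ) := by rw [Ico_add_one_right_eq_Icc]
end

section
/- For all n ≥ 1 and 1 ≤ k ≤ n, the number of weakly increasing unit Fubini rankings with n competitors having exactly k lucky cars equals the binomial coefficient C(k, n−k) (which is 0 when n−k > k). -/
/-- `α` has every value occurring at most twice among its entries (the "unit" condition:
a unit Fubini ranking is a Fubini ranking in which at most two competitors share a rank). -/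
def IsUnit2 {n : ℕ} (α : Fin n → Fin n) : Prop :=
  ∀ r : Fin n, (Finset.univ.filter (fun i => α i = r)).card ≤ 2

/-!
A weakly increasing Fubini ranking is exactly a monotone idempotent map `α` with `α i ≤ i`, and its
lucky cars are its fixed points; being a unit ranking means moreover that `i ≤ α i + 1`. So every
unlucky car ties with its immediate predecessor, which must be lucky, and `α` is determined by its
set of unlucky cars: any `n - k` elements of `{1, …, n - 1}`, no two of which are consecutive.
There are `C(n - (n - k), n - k) = C(k, n - k)` such sets, by Pascal's rule.
-/

open Finset

section SparseSets

/-- A set of natural numbers is sparse if it contains no two consecutive elements. -/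
def IsSparse (S : Finset ℕ) : Prop :=
  ∀ i ∈ S, i + 1 ∉ S

instance : DecidablePred IsSparse := fun S =>
  inferInstanceAs (Decidable (∀ i ∈ S, i + 1 ∉ S))

lemma isSparse_empty : IsSparse ∅ := by
  simp [IsSparse]

lemma isSparse_insert_succ_iff {x : ℕ} {T : Finset ℕ} (hT : ∀ i ∈ T, i ≤ x) :
    IsSparse (insert (x + 1) T) ↔ x ∉ T ∧ IsSparse T := by
  have hx_succ : x + 1 + 1 ∉ T := fun h => absurd (hT _ h) (by omega)
  rw [IsSparse, IsSparse, forall_mem_insert]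
  simp only [mem_insert, not_or]
  constructor
  · rintro ⟨-, h⟩
    exact ⟨fun hx => (h x hx).1 rfl, fun i hi => (h i hi).2⟩
  · rintro ⟨hx, h⟩
    refine ⟨⟨by omega, hx_succ⟩, fun i hi => ⟨fun e => hx ?_, h i hi⟩⟩
    rwa [← Nat.succ_injective e]

/-- The family of sparse `m`-element subsets of `s`; for `s = {1, …, n - 1}` these turn out to be
the possible sets of unlucky cars. -/
def sparseSets (s : Finset ℕ) (m : ℕ) : Finset (Finset ℕ) :=
  {S ∈ powersetCard m s | IsSparse S}

lemma mem_sparseSets {s S : Finset ℕ} {m : ℕ} :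
    S ∈ sparseSets s m ↔ S ⊆ s ∧ #S = m ∧ IsSparse S := by
  rw [sparseSets, mem_filter, mem_powersetCard, and_assoc]

lemma sparseSets_zero_right (s : Finset ℕ) : sparseSets s 0 = {∅} := by
  rw [sparseSets, powersetCard_zero, filter_singleton, if_pos isSparse_empty]

lemma sparseSets_empty_succ (m : ℕ) : sparseSets ∅ (m + 1) = ∅ := by
  rw [sparseSets, powersetCard_eq_empty.mpr (by simp), filter_empty]

lemma sparseSets_insert_succ {s : Finset ℕ} {x : ℕ} (hs : ∀ i ∈ s, i ≤ x) (m : ℕ) :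
    sparseSets (insert (x + 1) s) (m + 1) =
      sparseSets s (m + 1) ∪ (sparseSets (s.erase x) m).image (insert (x + 1)) := by
  have hx : x + 1 ∉ s := fun h => absurd (hs _ h) (by omega)
  have hfilter : {T ∈ powersetCard m s | IsSparse (insert (x + 1) T)} =
      sparseSets (s.erase x) m := by
    ext T
    rw [mem_filter, mem_powersetCard, mem_sparseSets, subset_erase]
    by_cases hT : T ⊆ s
    · rw [isSparse_insert_succ_iff fun i hi => hs i (hT hi)]
      tauto
    · tauto
  rw [sparseSets, powersetCard_succ_insert hx, filter_union, filter_image, hfilter,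
    ← sparseSets]

lemma card_sparseSets_insert_succ {s : Finset ℕ} {x : ℕ} (hs : ∀ i ∈ s, i ≤ x) (m : ℕ) :
    #(sparseSets (insert (x + 1) s) (m + 1)) =
      #(sparseSets s (m + 1)) + #(sparseSets (s.erase x) m) := by
  have hx : ∀ T ⊆ s, x + 1 ∉ T := fun T hT h => absurd (hs _ (hT h)) (by omega)
  have hdisj : Disjoint (sparseSets s (m + 1))
      ((sparseSets (s.erase x) m).image (insert (x + 1))) := by
    refine disjoint_left.mpr fun S hS hS' => ?_
    obtain ⟨T, -, rfl⟩ := mem_image.mp hS'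
    exact hx _ (mem_sparseSets.mp hS).1 (mem_insert_self _ _)
  have hinj : Set.InjOn (insert (x + 1)) (sparseSets (s.erase x) m : Set (Finset ℕ)) := by
    have hnot : ∀ T ∈ sparseSets (s.erase x) m, x + 1 ∉ T := fun T hT =>
      hx T ((mem_sparseSets.mp hT).1.trans (erase_subset _ _))
    intro S hS T hT h
    rw [← erase_insert (hnot S hS), h, erase_insert (hnot T hT)]
  rw [sparseSets_insert_succ hs, card_union_of_disjoint hdisj, card_image_of_injOn hinj]

theorem card_sparseSets_Ico_one (n m : ℕ) :
    #(sparseSets (Ico 1 n) m) = (n - m).choose m := by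
  induction n using Nat.twoStepInduction generalizing m with
  | zero => cases m <;> simp [sparseSets_zero_right, sparseSets_empty_succ]
  | one => cases m <;> simp [sparseSets_zero_right, sparseSets_empty_succ]
  | more n ih₁ ih₂ =>
    cases m with
    | zero => simp [sparseSets_zero_right]
    | succ m =>
      have hinsert : Ico 1 (n + 2) = insert (n + 1) (Ico 1 (n + 1)) := by
        ext i; simp only [mem_insert, mem_Ico]; omega
      have herase : (Ico 1 (n + 1)).erase n = Ico 1 n := by
        ext i; simp only [mem_erase, mem_Ico]; omega
      rw [hinsert, card_sparseSets_insert_succ fun i hi => Nat.lt_succ_iff.mp (mem_Ico.mp hi).2,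
        herase, ih₁, ih₂, Nat.add_sub_add_right]
      rcases le_or_gt m n with hmn | hnm
      · rw [show n + 2 - (m + 1) = n - m + 1 by omega, Nat.choose_succ_succ', add_comm]
      · rw [Nat.choose_eq_zero_of_lt, Nat.choose_eq_zero_of_lt, Nat.choose_eq_zero_of_lt] <;> omega

end SparseSets

section Rankings

variable {n : ℕ} {α : Fin n → Fin n}

lemma IsFubini.apply_lt_apply_iff (hf : IsFubini α) (hm : Monotone α) (i j : Fin n) :
    α j < α i ↔ j < α i := by
  have hcard : #{l | α l < α i} = (α i : ℕ) := hf (α i) ⟨i, rfl⟩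
  constructor
  · intro h
    have hsub : Iic j ⊆ ({l | α l < α i} : Finset (Fin n)) := fun l hl =>
      mem_filter_univ l |>.mpr ((hm (mem_Iic.mp hl)).trans_lt h)
    have hle := card_le_card hsub
    rwa [hcard, Fin.card_Iic] at hle
  · intro h
    by_contra hji
    have hsub : ({l | α l < α i} : Finset (Fin n)) ⊆ Iio j := fun l hl =>
      mem_Iio.mpr (hm.reflect_lt (((mem_filter_univ l).mp hl).trans_le (not_lt.mp hji)))
    have hle := card_le_card hsub
    rw [hcard, Fin.card_Iio] at hle
    exact hle.not_gt h

lemma isFubini_iff_of_monotone (hm : Monotone α) :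
    IsFubini α ↔ ∀ i, α i ≤ i ∧ α (α i) = α i := by
  constructor
  · intro hf i
    have hle : α i ≤ i := not_lt.mp fun h => lt_irrefl _ ((hf.apply_lt_apply_iff hm i i).mpr h)
    have hge : α i ≤ α (α i) :=
      not_lt.mp fun h => lt_irrefl _ ((hf.apply_lt_apply_iff hm i (α i)).mp h)
    exact ⟨hle, (hm hle).antisymm hge⟩
  · rintro h r ⟨i, rfl⟩
    have hIio : ({j | α j < α i} : Finset (Fin n)) = Iio (α i) := by
      ext j
      rw [mem_filter_univ, mem_Iio]
      refine ⟨fun hj => hm.reflect_lt ?_, (h j).1.trans_lt⟩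
      rwa [(h i).2]
    rw [hIio, Fin.card_Iio]

lemma isUnit2_of_le_apply_add_one (hle : ∀ i, α i ≤ i) (hge : ∀ i : Fin n, (i : ℕ) ≤ α i + 1) :
    IsUnit2 α := by
  intro r
  have hsub : ({i | α i = r} : Finset (Fin n)).map Fin.valEmbedding ⊆ Icc (r : ℕ) (r + 1) := by
    intro x hx
    obtain ⟨i, hi, rfl⟩ := mem_map.mp hx
    obtain rfl := (mem_filter_univ i).mp hi
    exact mem_Icc.mpr ⟨hle i, hge i⟩
  have hcard := card_le_card hsub
  rw [card_map, Nat.card_Icc] at hcard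
  omega

lemma IsUnit2.le_apply_add_one (hu : IsUnit2 α) (hm : Monotone α)
    (hidem : ∀ i, α (α i) = α i) (i : Fin n) : (i : ℕ) ≤ α i + 1 := by
  have hsub : Icc (α i) i ⊆ ({l | α l = α i} : Finset (Fin n)) := by
    intro l hl
    obtain ⟨hl₁, hl₂⟩ := mem_Icc.mp hl
    exact (mem_filter_univ l).mpr ((hm hl₂).antisymm ((hidem i).symm.trans_le (hm hl₁)))
  have hcard := (card_le_card hsub).trans (hu (α i))
  rw [Fin.card_Icc] at hcard
  omega

/-- A ranking in which every car has its own index or the preceding one as its rank, and ranks in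
use are held by the car of the same index. This is a local description of the weakly increasing
unit Fubini rankings. -/
structure TiesWithPred (α : Fin n → Fin n) : Prop where
  apply_le (i : Fin n) : α i ≤ i
  le_apply_add_one (i : Fin n) : (i : ℕ) ≤ α i + 1
  apply_apply (i : Fin n) : α (α i) = α i

lemma TiesWithPred.monotone (h : TiesWithPred α) : Monotone α := by
  refine monotone_iff_forall_lt.mpr fun i j hij => ?_
  have hi := h.apply_le i
  have hj := h.le_apply_add_one j
  rw [Fin.le_def] at hi ⊢
  rw [Fin.lt_def] at hij
  omega

lemma TiesWithPred.val_apply_add_one (h : TiesWithPred α) {i : Fin n} (hi : α i ≠ i) :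
    (α i : ℕ) + 1 = i :=
  le_antisymm (Fin.lt_def.mp ((h.apply_le i).lt_of_ne hi)) (h.le_apply_add_one i)

lemma isFubini_isUnit2_monotone_iff_tiesWithPred :
    IsFubini α ∧ IsUnit2 α ∧ Monotone α ↔ TiesWithPred α := by
  constructor
  · rintro ⟨hf, hu, hm⟩
    have h := (isFubini_iff_of_monotone hm).mp hf
    exact ⟨fun i => (h i).1, hu.le_apply_add_one hm fun i => (h i).2, fun i => (h i).2⟩
  · intro h
    exact ⟨(isFubini_iff_of_monotone h.monotone).mpr fun i => ⟨h.apply_le i, h.apply_apply i⟩,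
      isUnit2_of_le_apply_add_one h.apply_le h.le_apply_add_one, h.monotone⟩

end Rankings

section UnluckyCars

variable {n : ℕ} {α : Fin n → Fin n}

lemma mem_luckySet_iff_apply_eq (hle : ∀ i, α i ≤ i) (hidem : ∀ i, α (α i) = α i) (i : Fin n) :
    i ∈ luckySet α ↔ α i = i := by
  rw [luckySet, mem_filter_univ]
  constructor
  · intro hlucky
    by_contra hi
    exact hlucky (α i) ((hle i).lt_of_ne hi) (hidem i)
  · intro hi j hj hji
    exact (hle j).not_gt (by rwa [hji, hi])

/-- The set of unlucky cars of `α`, as natural numbers; it encodes a weakly increasing unit Fubini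
ranking. Cars are numbered from `0`, so car `0` is always lucky. -/
def unluckySet (α : Fin n → Fin n) : Finset ℕ :=
  (luckySet α)ᶜ.map Fin.valEmbedding

lemma lucky_add_card_unluckySet (α : Fin n → Fin n) : lucky α + #(unluckySet α) = n := by
  rw [lucky, unluckySet, card_map, card_add_card_compl, Fintype.card_fin]

lemma TiesWithPred.mem_unluckySet (h : TiesWithPred α) {x : ℕ} :
    x ∈ unluckySet α ↔ ∃ i : Fin n, α i ≠ i ∧ (i : ℕ) = x := by
  simp [unluckySet, mem_luckySet_iff_apply_eq h.apply_le h.apply_apply]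

lemma TiesWithPred.val_mem_unluckySet (h : TiesWithPred α) {i : Fin n} :
    (i : ℕ) ∈ unluckySet α ↔ α i ≠ i := by
  simp [h.mem_unluckySet, Fin.val_inj]

lemma TiesWithPred.unluckySet_subset_Ico (h : TiesWithPred α) : unluckySet α ⊆ Ico 1 n := by
  intro x hx
  obtain ⟨i, hi, rfl⟩ := h.mem_unluckySet.mp hx
  have hpred := h.val_apply_add_one hi
  exact mem_Ico.mpr ⟨by omega, i.isLt⟩

lemma TiesWithPred.isSparse_unluckySet (h : TiesWithPred α) : IsSparse (unluckySet α) := by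
  intro x hx hx'
  obtain ⟨i, hi, rfl⟩ := h.mem_unluckySet.mp hx
  obtain ⟨j, hj, hji⟩ := h.mem_unluckySet.mp hx'
  have hpred : α j = i := Fin.ext (Nat.succ_injective ((h.val_apply_add_one hj).trans hji))
  exact hi (hpred ▸ h.apply_apply j)

/-- The ranking in which the cars in `S` tie with their predecessors and all others are ranked by
index: the inverse of `unluckySet`. Truncated subtraction gives car `0` the rank `0` even if
`0 ∈ S`. -/
def tieWithPred (S : Finset ℕ) (i : Fin n) : Fin n :=
  if (i : ℕ) ∈ S then ⟨i - 1, by omega⟩ else i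

lemma val_tieWithPred (S : Finset ℕ) (i : Fin n) :
    (tieWithPred S i : ℕ) = if (i : ℕ) ∈ S then (i : ℕ) - 1 else i := by
  rw [tieWithPred, apply_ite Fin.val]

lemma tieWithPred_eq_self_iff {S : Finset ℕ} (hS : 0 ∉ S) (i : Fin n) :
    tieWithPred S i = i ↔ (i : ℕ) ∉ S := by
  rw [Fin.ext_iff, val_tieWithPred]
  split_ifs with hi
  · have hpos : (i : ℕ) ≠ 0 := fun h => hS (h ▸ hi)
    simp only [hi, not_true_eq_false, iff_false]
    omega
  · simp only [hi, not_false_eq_true]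

lemma tiesWithPred_tieWithPred {S : Finset ℕ} (hS : 0 ∉ S) (hsparse : IsSparse S) :
    TiesWithPred (tieWithPred S : Fin n → Fin n) where
  apply_le i := by
    rw [Fin.le_def, val_tieWithPred]
    split_ifs <;> omega
  le_apply_add_one i := by
    rw [val_tieWithPred]
    split_ifs <;> omega
  apply_apply i := by
    rw [tieWithPred_eq_self_iff hS, val_tieWithPred]
    split_ifs with hi
    · have hpos : (i : ℕ) ≠ 0 := fun h => hS (h ▸ hi)
      intro hpred
      exact hsparse _ hpred (by rwa [Nat.sub_one_add_one hpos])
    · exact hi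

lemma unluckySet_tieWithPred {S : Finset ℕ} (hS : S ⊆ Ico 1 n) (hsparse : IsSparse S) :
    unluckySet (tieWithPred S : Fin n → Fin n) = S := by
  have h0 : 0 ∉ S := fun h => absurd (mem_Ico.mp (hS h)).1 (by omega)
  ext x
  simp only [(tiesWithPred_tieWithPred h0 hsparse).mem_unluckySet, ne_eq,
    tieWithPred_eq_self_iff h0, not_not]
  constructor
  · rintro ⟨i, hi, rfl⟩
    exact hi
  · exact fun hx => ⟨⟨x, (mem_Ico.mp (hS hx)).2⟩, hx, rfl⟩

lemma TiesWithPred.tieWithPred_unluckySet (h : TiesWithPred α) :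
    tieWithPred (unluckySet α) = α := by
  funext i
  rw [Fin.ext_iff, val_tieWithPred]
  split_ifs with hi
  · rw [← h.val_apply_add_one (h.val_mem_unluckySet.mp hi), Nat.add_sub_cancel]
  · rw [h.val_mem_unluckySet, not_not] at hi
    rw [hi]

/-- A weakly increasing unit Fubini ranking with `m` unlucky cars, encoded as its set of unlucky
cars. -/
def tiesWithPredEquivSparseSets (n m : ℕ) :
    {α : Fin n → Fin n // TiesWithPred α ∧ #(unluckySet α) = m} ≃ sparseSets (Ico 1 n) m where
  toFun α := ⟨unluckySet α.1, mem_sparseSets.mpr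
    ⟨α.2.1.unluckySet_subset_Ico, α.2.2, α.2.1.isSparse_unluckySet⟩⟩
  invFun S := ⟨tieWithPred S.1, by
    obtain ⟨hS, hcard, hsparse⟩ := mem_sparseSets.mp S.2
    have h0 : 0 ∉ S.1 := fun h => absurd (mem_Ico.mp (hS h)).1 (by omega)
    exact ⟨tiesWithPred_tieWithPred h0 hsparse, by rw [unluckySet_tieWithPred hS hsparse, hcard]⟩⟩
  left_inv α := Subtype.ext α.2.1.tieWithPred_unluckySet
  right_inv S :=
    have ⟨hS, _, hsparse⟩ := mem_sparseSets.mp S.2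
    Subtype.ext (unluckySet_tieWithPred hS hsparse)

end UnluckyCars

/-- For `1 ≤ k ≤ n`, the number of weakly increasing unit Fubini
rankings with `n` competitors having exactly `k` lucky cars equals `C(k, n−k)`. -/
theorem card_weakly_increasing_unit_fubini_lucky
    (n k : ℕ) (hn : 1 ≤ n) (hk : 1 ≤ k) (hkn : k ≤ n) :
    Nat.card {α : Fin n → Fin n //
        IsFubini α ∧ IsUnit2 α ∧ Monotone α ∧ lucky α = k}
      = Nat.choose k (n - k) := by
  have hiff (α : Fin n → Fin n) : IsFubini α ∧ IsUnit2 α ∧ Monotone α ∧ lucky α = k ↔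
      TiesWithPred α ∧ #(unluckySet α) = n - k := by
    have hcard := lucky_add_card_unluckySet α
    rw [← isFubini_isUnit2_monotone_iff_tiesWithPred, and_assoc, and_assoc,
      show lucky α = k ↔ #(unluckySet α) = n - k by omega]
  calc Nat.card {α : Fin n → Fin n // IsFubini α ∧ IsUnit2 α ∧ Monotone α ∧ lucky α = k}
      = Nat.card (sparseSets (Ico 1 n) (n - k)) :=
        Nat.card_congr
          ((Equiv.subtypeEquivRight hiff).trans (tiesWithPredEquivSparseSets n (n - k)))
    _ = #(sparseSets (Ico 1 n) (n - k)) := Nat.card_eq_finsetCard _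
    _ = k.choose (n - k) := by rw [card_sparseSets_Ico_one, Nat.sub_sub_self hkn]
end
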